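/- arXiv:1810.09866 — 8 statements merged into one kernel-verified Lean document; each statement's English description precedes it below -/
import Mathlib

section
/- Let n be a positive integer and c : ZMod n → ℕ a weight function whose support generates the additive group ZMod n, with W = ∑_s c(s) ≥ 2, and let A be the associated integer circulant matrix A i j = c(j − i). If d is a natural number such that d · 𝟙 lies in the range of I − Aᵀ (acting on integer vectors indexed by ZMod n), then (W − 1) divides n·d. Consequently, if gcd(W − 1, n) = 1, then the class of the all-ones vector 𝟙 in Coker(I − Aᵀ) has additive order exactly W − 1. -/
/-!
Every row and every column of the circulant matrix `A` is a rearrangement of the values of `c`, so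
each has sum `W`. Column sums of `1 - Aᵀ` being `1 - W`, summing the coordinates of
`d • 𝟙 = (1 - Aᵀ) x` gives `n * d = (1 - W) * ∑ x`, whence `W - 1 ∣ n * d`; if `W - 1` is coprime
to `n`, then `W - 1 ∣ d`, in particular when `d` is the order of the class of `𝟙`.
Row sums of `1 - Aᵀ` being `1 - W`, we have
`(1 - Aᵀ) (-𝟙) = (W - 1) • 𝟙`, so `W - 1` kills the class of `𝟙`.
-/

open Matrix Finset

/-- The sum of the coordinates is multiplied by `1 - ∑ s, c s` under `1 - Aᵀ`. -/
lemma sum_one_sub_circulant_mulVec (n : ℕ) [NeZero n] (c : ZMod n → ℕ)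
    (A : Matrix (ZMod n) (ZMod n) ℤ) (hA : ∀ i j, A i j = c (j - i)) (x : ZMod n → ℤ) :
    ∑ i, ((1 - Aᵀ) *ᵥ x) i = (1 - ((∑ s, c s : ℕ) : ℤ)) * ∑ i, x i := by
  have hcol : ∀ j, ∑ i, A j i = ((∑ s, c s : ℕ) : ℤ) := fun j => by
    simp only [hA]
    push_cast
    exact Equiv.sum_comp (Equiv.subRight j) fun s => (c s : ℤ)
  have hA' : ∑ i, (Aᵀ *ᵥ x) i = ((∑ s, c s : ℕ) : ℤ) * ∑ i, x i := by
    simp only [mulVec, dotProduct, transpose_apply]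
    rw [Finset.sum_comm, Finset.mul_sum]
    exact Finset.sum_congr rfl fun j _ => by rw [← Finset.sum_mul, hcol]
  rw [sub_mulVec, one_mulVec]
  simp only [Pi.sub_apply, Finset.sum_sub_distrib, hA']
  ring

lemma one_sub_circulant_mulVec_one (n : ℕ) [NeZero n] (c : ZMod n → ℕ)
    (A : Matrix (ZMod n) (ZMod n) ℤ) (hA : ∀ i j, A i j = c (j - i)) :
    (1 - Aᵀ) *ᵥ (1 : ZMod n → ℤ) = (1 - ((∑ s, c s : ℕ) : ℤ)) • (1 : ZMod n → ℤ) := by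
  have hrow : ∀ i, ∑ j, A j i = ((∑ s, c s : ℕ) : ℤ) := fun i => by
    simp only [hA]
    push_cast
    exact Equiv.sum_comp (Equiv.subLeft i) fun s => (c s : ℤ)
  ext i
  rw [sub_mulVec, one_mulVec]
  simp [mulVec, dotProduct, -Nat.cast_sum, hrow]

/-- If `e • 𝟙` vanishes in the cokernel, compare the coordinate sums of `e • 𝟙` and a preimage. -/
lemma dvd_of_smul_one_mem_range (n : ℕ) [NeZero n] (c : ZMod n → ℕ)
    (A : Matrix (ZMod n) (ZMod n) ℤ) (hA : ∀ i j, A i j = c (j - i)) (e : ℤ)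
    (he : e • (1 : ZMod n → ℤ) ∈
      LinearMap.range ((1 - Aᵀ : Matrix (ZMod n) (ZMod n) ℤ).mulVecLin)) :
    (((∑ s, c s : ℕ) : ℤ) - 1) ∣ (n : ℤ) * e := by
  obtain ⟨x, hx⟩ := he
  rw [mulVecLin_apply] at hx
  have h := sum_one_sub_circulant_mulVec n c A hA x
  rw [hx] at h
  have h' : (n : ℤ) * e = (1 - ((∑ s, c s : ℕ) : ℤ)) * ∑ i, x i := by
    rw [← h]
    simp [ZMod.card]
  exact ⟨-∑ i, x i, by rw [h']; ring⟩

/-- If the support of `c` generates `ZMod n`, `W = ∑ s, c s ≥ 2`, and `d • 𝟙` lies in the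
range of `I - Aᵀ`, then `W - 1 ∣ n * d`; consequently if `gcd(W-1, n) = 1` then the class
of the all-ones vector in the cokernel of `I - Aᵀ` has additive order exactly `W - 1`. -/
theorem stmt_2 (n : ℕ) [NeZero n] (c : ZMod n → ℕ)
    (hgen : AddSubgroup.closure (Function.support c) = (⊤ : AddSubgroup (ZMod n)))
    (W : ℕ) (hW : W = ∑ s : ZMod n, c s) (hW2 : 2 ≤ W)
    (A : Matrix (ZMod n) (ZMod n) ℤ) (hA : ∀ i j, A i j = c (j - i))
    (d : ℕ)
    (hd : (d : ℤ) • (1 : ZMod n → ℤ) ∈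
      LinearMap.range ((1 - Aᵀ : Matrix (ZMod n) (ZMod n) ℤ).mulVecLin)) :
    ((W : ℤ) - 1) ∣ (n : ℤ) * d ∧
      (Nat.gcd (W - 1) n = 1 →
        addOrderOf
          ((Submodule.Quotient.mk (1 : ZMod n → ℤ) :
            (ZMod n → ℤ) ⧸
              LinearMap.range ((1 - Aᵀ : Matrix (ZMod n) (ZMod n) ℤ).mulVecLin))) = W - 1) := by
  subst hW
  refine ⟨dvd_of_smul_one_mem_range n c A hA d hd, fun hcop => ?_⟩
  have hcast : ((((∑ s, c s) - 1 : ℕ)) : ℤ) = ((∑ s, c s : ℕ) : ℤ) - 1 := by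
    rw [Nat.cast_sub (by omega), Nat.cast_one]
  apply Nat.dvd_antisymm
  · rw [addOrderOf_dvd_iff_nsmul_eq_zero, ← Submodule.Quotient.mk_smul,
      Submodule.Quotient.mk_eq_zero]
    refine ⟨-1, ?_⟩
    rw [mulVecLin_apply, mulVec_neg, one_sub_circulant_mulVec_one n c A hA, ← neg_smul,
      neg_sub, ← hcast, natCast_zsmul]
  · have h0 := addOrderOf_nsmul_eq_zero
      ((Submodule.Quotient.mk (1 : ZMod n → ℤ) :
        (ZMod n → ℤ) ⧸ LinearMap.range ((1 - Aᵀ : Matrix (ZMod n) (ZMod n) ℤ).mulVecLin)))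
    rw [← Submodule.Quotient.mk_smul, Submodule.Quotient.mk_eq_zero, ← natCast_zsmul] at h0
    have h1 := dvd_of_smul_one_mem_range n c A hA _ h0
    rw [← hcast] at h1
    exact Nat.Coprime.dvd_of_dvd_mul_left hcop (by exact_mod_cast h1)
end

section
/- Let n be a positive integer and c : ZMod n → ℕ a weight function whose support S generates the additive group ZMod n, such that 0 ∉ S, S ≠ ZMod n, and W = ∑_s c(s) ≥ 2. Let A be the associated integer circulant matrix A i j = c(j − i), and let m ∈ {1,…,n−1} be the largest canonical representative of an element of S. Let T be the m×m integer matrix (indexed by Fin m, 0-indexed) given by: for q = m−1 (the last column), T p q = c(m − p) (with m − p interpreted as a residue mod n); and for q < m−1, T p q = 1 if p = q + 1 and 0 otherwise. Then there is an isomorphism of ℤ-modules Coker(I_n − Aᵀ) ≅ Coker(Tⁿ − I_m), i.e. (ZMod n → ℤ) ⧸ range(I − Aᵀ) ≃ (Fin m → ℤ) ⧸ range(Tⁿ − I). -/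
open Matrix Finset

/-!
Both cokernels are the additive group of `ℤ[X] ⧸ (p, X ^ n - 1)`, where
`p = X ^ m - ∑ s, c s X ^ (m - s)`.

For an endomorphism `E` with cyclic vector `v` and minimal relation `g(E) v = 0`, the map
`f ↦ f(E) v` identifies the module with `ℤ[X] ⧸ (g)`, so the cokernel of `h(E)` is
`ℤ[X] ⧸ (g, h)` (`coker_aeval_equiv`). This applies to `T` with `g = p` and `h = X ^ n - 1`,
and to the shift `(R x) i = x (i + 1)` on `ZMod n → ℤ` with `g = X ^ n - 1` and `h = p`.
In the second case `1 - Aᵀ = 1 - ∑ s, c s R ^ (-s)`, so `p(R) = (1 - Aᵀ) R ^ m`, which has the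
same range as `1 - Aᵀ` because `R` is invertible.
-/

open Polynomial in
/-- If `v` is a cyclic vector for `E` with basis `v, E v, …, E ^ (d - 1) v`, and `g` is monic of
degree `d` with `g(E) v = 0`, then `f ↦ f(E) v` identifies the module with `ℤ[X] ⧸ (g)`, and hence
the cokernel of `h(E)` with `ℤ[X] ⧸ (g, h)`. -/
theorem coker_aeval_equiv {V : Type*} [AddCommGroup V] (E : Module.End ℤ V) (v : V)
    (g h : ℤ[X]) (d : ℕ) (hg : g.Monic) (hd : g.natDegree = d) (hgv : aeval E g v = 0)
    (b : Module.Basis (Fin d) ℤ V) (hb : ∀ i : Fin d, b i = (E ^ (i : ℕ)) v) :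
    Nonempty ((V ⧸ LinearMap.range (aeval E h)) ≃ₗ[ℤ]
      (ℤ[X] ⧸ (Ideal.span {g, h}).restrictScalars ℤ)) := by
  let φ : ℤ[X] →ₗ[ℤ] V := (LinearMap.applyₗ v).comp (aeval E).toLinearMap
  have hφ : ∀ f, φ f = aeval E f v := fun f => rfl
  have hmul : ∀ f k, φ (f * k) = aeval E f (φ k) := by
    intro f k; simp [hφ]
  have hsurj : Function.Surjective φ := by
    rw [← LinearMap.range_eq_top, eq_top_iff, ← b.span_eq, Submodule.span_le]
    rintro _ ⟨i, rfl⟩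
    exact ⟨X ^ (i : ℕ), by simp [hφ, hb]⟩
  have hker : ∀ f, φ f = 0 → g ∣ f := by
    intro f hf
    rw [← modByMonic_eq_zero_iff_dvd hg]
    by_contra hr
    have hlt : (f %ₘ g).natDegree < d := by
      rw [← hd]
      exact natDegree_lt_natDegree hr (degree_modByMonic_lt f hg)
    have h1 : φ (f %ₘ g) = 0 := by
      rw [modByMonic_eq_sub_mul_div f, map_sub, hf, mul_comm, hmul, hφ g, hgv]
      simp
    rw [hφ, aeval_eq_sum_range' hlt, Finset.sum_range] at h1
    have h2 : ∑ i : Fin d, (f %ₘ g).coeff i • b i = 0 := by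
      simpa [hb, LinearMap.sum_apply] using h1
    have h3 := Fintype.linearIndependent_iff.1 b.linearIndependent _ h2
    apply hr
    ext k
    by_cases hk : k < d
    · simpa using h3 ⟨k, hk⟩
    · simpa using coeff_eq_zero_of_natDegree_lt (by omega)
  let ψ := (LinearMap.range (aeval E h)).mkQ.comp φ
  have hψ : Function.Surjective ψ := (Submodule.mkQ_surjective _).comp hsurj
  have hk : LinearMap.ker ψ = (Ideal.span {g, h}).restrictScalars ℤ := by
    ext f
    simp only [ψ, LinearMap.mem_ker, LinearMap.comp_apply, Submodule.mkQ_apply,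
      Submodule.Quotient.mk_eq_zero, LinearMap.mem_range, Submodule.restrictScalars_mem,
      Ideal.mem_span_pair]
    constructor
    · rintro ⟨u, hu⟩
      obtain ⟨k, rfl⟩ := hsurj u
      obtain ⟨a, ha⟩ := hker (f - h * k) (by rw [map_sub, hmul, hu, sub_self])
      exact ⟨a, k, by linear_combination -ha⟩
    · rintro ⟨a, k, rfl⟩
      refine ⟨φ k, ?_⟩
      rw [map_add, hmul a g, hφ g, hgv, map_zero, zero_add, mul_comm, hmul]
  exact ⟨((Submodule.quotEquivOfEq _ _ hk.symm).trans (ψ.quotKerEquivOfSurjective hψ)).symm⟩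

/-- A function on `ZMod n` vanishing at `0` and at residues above `m < n` may be summed over the
residues `m, m - 1, …, 1` only. -/
theorem sum_zmod_eq_sum_range {n : ℕ} [NeZero n] (m : ℕ) (hmn : m < n) (F : ZMod n → ℤ)
    (h0 : F 0 = 0) (hF : ∀ s, m < s.val → F s = 0) :
    ∑ s, F s = ∑ j ∈ range m, F ((m - j : ℕ) : ZMod n) := by
  symm
  have hv : ∀ j, ((m - j : ℕ) : ZMod n).val = m - j := fun j => ZMod.val_cast_of_lt (by omega)
  refine Finset.sum_of_injOn (fun j => ((m - j : ℕ) : ZMod n)) ?_ ?_ ?_ ?_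
  · intro i hi j hj hij
    have := congrArg ZMod.val hij
    simp only [hv, coe_range, Set.mem_Iio] at *
    omega
  · intro i _; simp
  · intro s _ hs
    by_cases hs0 : s = 0
    · rw [hs0, h0]
    apply hF
    by_contra hle
    have hpos : s.val ≠ 0 := by rwa [Ne, ZMod.val_eq_zero]
    refine hs ⟨m - s.val, Finset.mem_coe.2 (Finset.mem_range.2 (by omega)), ?_⟩
    have : m - (m - s.val) = s.val := by omega
    simp [this]
  · intro i _; rfl

open Polynomial in
/-- The polynomial `X ^ m - ∑ j < m, c (m - j) X ^ j`, whose companion matrix is `T`. -/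
noncomputable def compPoly {n : ℕ} (c : ZMod n → ℕ) (m : ℕ) : ℤ[X] :=
  X ^ m - ∑ j ∈ range m, C (c ((m - j : ℕ) : ZMod n) : ℤ) * X ^ j

open Polynomial in
theorem compPoly_degree_tail {n : ℕ} (c : ZMod n → ℕ) (m : ℕ) :
    (∑ j ∈ range m, C (c ((m - j : ℕ) : ZMod n) : ℤ) * X ^ j).degree < (m : WithBot ℕ) := by
  refine lt_of_le_of_lt (degree_sum_le _ _) ?_
  rw [Finset.sup_lt_iff (WithBot.bot_lt_coe _)]
  intro j hj
  exact lt_of_le_of_lt (degree_C_mul_X_pow_le _ _) (by exact_mod_cast Finset.mem_range.1 hj)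

theorem compPoly_monic {n : ℕ} (c : ZMod n → ℕ) (m : ℕ) : (compPoly c m).Monic :=
  Polynomial.monic_X_pow_sub (compPoly_degree_tail c m)

theorem compPoly_natDegree {n : ℕ} (c : ZMod n → ℕ) (m : ℕ) : (compPoly c m).natDegree = m := by
  unfold compPoly
  apply Polynomial.natDegree_eq_of_degree_eq_some
  rw [Polynomial.degree_sub_eq_left_of_degree_lt, Polynomial.degree_X_pow]
  simpa only [Polynomial.degree_X_pow] using compPoly_degree_tail c m

/-- The shift `(R x) i = x (i + 1)` on `ZMod n → ℤ`. -/
def shift (n : ℕ) : Module.End ℤ (ZMod n → ℤ) := LinearMap.funLeft ℤ ℤ (fun i => i + 1)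

theorem shift_pow_apply (n k : ℕ) (x : ZMod n → ℤ) (i : ZMod n) :
    (shift n ^ k) x i = x (i + k) := by
  induction k generalizing x with
  | zero => simp
  | succ k ih =>
    rw [pow_succ, Module.End.mul_apply, ih]
    simp [shift, LinearMap.funLeft_apply, add_assoc]


/-- Reduction theorem: if `0 ∉ S`, `S ≠ ZMod n`, `⟨S⟩ = ZMod n` and `W ≥ 2`, where `S` is
the support of the weight function `c`, and `m` is the largest canonical representative of
an element of `S`, then `Coker(I_n - Aᵀ) ≅ Coker(Tⁿ - I_m)` where `T` is the `m × m`
companion matrix of `p(t) = t^m - ∑_j c(s_j) t^{m - s_j}`. -/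
theorem stmt_5 (n : ℕ) [NeZero n] (c : ZMod n → ℕ)
    (hgen : AddSubgroup.closure (Function.support c) = (⊤ : AddSubgroup (ZMod n)))
    (h0 : (0 : ZMod n) ∉ Function.support c)
    (hne : Function.support c ≠ Set.univ)
    (W : ℕ) (hW : W = ∑ s : ZMod n, c s) (hW2 : 2 ≤ W)
    (A : Matrix (ZMod n) (ZMod n) ℤ) (hA : ∀ i j, A i j = c (j - i))
    (m : ℕ) (hm : IsGreatest (ZMod.val '' Function.support c) m)
    (T : Matrix (Fin m) (Fin m) ℤ)
    (hT : ∀ p q : Fin m, T p q =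
      if (q : ℕ) = m - 1 then (c (((m - (p : ℕ) : ℕ) : ZMod n)) : ℤ)
      else if (p : ℕ) = (q : ℕ) + 1 then 1 else 0) :
    Nonempty (((ZMod n → ℤ) ⧸
        LinearMap.range ((1 - Aᵀ : Matrix (ZMod n) (ZMod n) ℤ).mulVecLin)) ≃ₗ[ℤ]
      ((Fin m → ℤ) ⧸
        LinearMap.range ((T ^ n - 1 : Matrix (Fin m) (Fin m) ℤ).mulVecLin))) := by
  obtain ⟨⟨s₀, hs₀, hs₀m⟩, hmax⟩ := hm
  have hmn : m < n := hs₀m ▸ ZMod.val_lt s₀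
  have hm0 : 0 < m := by
    rcases Nat.eq_zero_or_pos m with h | h
    · rw [h, ZMod.val_eq_zero] at hs₀m
      exact absurd (hs₀m ▸ hs₀) h0
    · exact h
  have hc0 : c 0 = 0 := by simpa using h0
  have hcm : ∀ s : ZMod n, m < s.val → c s = 0 := by
    intro s hs
    by_contra hne'
    exact absurd (hmax ⟨s, hne', rfl⟩) (by omega)
  set p := compPoly c m with hp
  -- Evaluating `p` at the shift gives `(1 - Aᵀ) R ^ m`.
  have hcomp : Polynomial.aeval (shift n) p
      = ((1 - Aᵀ : Matrix (ZMod n) (ZMod n) ℤ).mulVecLin).comp (shift n ^ m) := by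
    refine LinearMap.ext fun x => funext fun i => ?_
    have hsum := sum_zmod_eq_sum_range m hmn (fun s => (c s : ℤ) * x (i + m - s))
      (by simp [hc0]) (fun s hs => by simp [hcm s hs])
    have hL : Polynomial.aeval (shift n) p x i
        = x (i + m) - ∑ j ∈ range m, (c ((m - j : ℕ) : ZMod n) : ℤ) * x (i + j) := by
      simp [hp, compPoly, LinearMap.sum_apply, Finset.sum_apply, shift_pow_apply]
    rw [hL, LinearMap.comp_apply, Matrix.mulVecLin_apply, Matrix.sub_mulVec, Matrix.one_mulVec,
      Pi.sub_apply, shift_pow_apply]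
    congr 1
    have hR : (Aᵀ *ᵥ (shift n ^ m) x) i = ∑ s : ZMod n, (c s : ℤ) * x (i + m - s) := by
      rw [← Equiv.sum_comp (Equiv.subLeft i)]
      simp only [Matrix.mulVec, dotProduct, Matrix.transpose_apply, hA, shift_pow_apply,
        Equiv.subLeft_apply]
      exact Finset.sum_congr rfl fun s _ => by congr 2; ring
    rw [hR, hsum]
    refine Finset.sum_congr rfl fun j hj => ?_
    have hj' := Finset.mem_range.1 hj
    congr 2
    rw [Nat.cast_sub hj'.le]
    ring
  have hRn : shift n ^ n = 1 := by
    refine LinearMap.ext fun x => funext fun i => ?_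
    simp [shift_pow_apply]
  have hRsurj : LinearMap.range (shift n ^ m) = ⊤ := by
    rw [LinearMap.range_eq_top]
    intro y
    refine ⟨(shift n ^ (n - m)) y, ?_⟩
    rw [← Module.End.mul_apply, ← pow_add, Nat.add_sub_cancel' hmn.le, hRn]
    rfl
  have hrange : LinearMap.range (Polynomial.aeval (shift n) p)
      = LinearMap.range ((1 - Aᵀ : Matrix (ZMod n) (ZMod n) ℤ).mulVecLin) := by
    rw [hcomp, LinearMap.range_comp_of_range_eq_top _ hRsurj]
  let e : Fin n ≃ ZMod n := Equiv.ofBijective (fun i => -((i : ℕ) : ZMod n)) (by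
    rw [Fintype.bijective_iff_injective_and_card]
    refine ⟨fun i j hij => ?_, by simp [ZMod.card]⟩
    have := congrArg ZMod.val (neg_injective hij)
    rw [ZMod.val_cast_of_lt i.2, ZMod.val_cast_of_lt j.2] at this
    exact Fin.ext this)
  obtain ⟨e₁⟩ := coker_aeval_equiv (shift n) (Pi.single 0 1) (Polynomial.X ^ n - 1) p n
    (Polynomial.monic_X_pow_sub_C (1 : ℤ) (NeZero.ne n))
    (Polynomial.natDegree_X_pow_sub_C (r := (1 : ℤ))) (by simp [hRn])
    ((Pi.basisFun ℤ (ZMod n)).reindex e.symm) (by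
      intro i
      funext k
      simp [e, shift_pow_apply, Pi.single_apply, eq_neg_iff_add_eq_zero])
  -- The companion matrix moves `e_q` to `e_{q+1}`, so `e_0` is cyclic with `T ^ i e_0 = e_i`.
  let o : Fin m := ⟨0, hm0⟩
  have hTi : ∀ k (hk : k < m), (T.mulVecLin ^ k) (Pi.single o 1) = Pi.single ⟨k, hk⟩ 1 := by
    intro k
    induction k with
    | zero => intro hk; simp [o]
    | succ k ih =>
      intro hk
      rw [pow_succ', Module.End.mul_apply, ih (by omega)]
      funext i
      have : k ≠ m - 1 := by omega
      simp [hT, this, Pi.single_apply, Fin.ext_iff]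
  have hTm : (T.mulVecLin ^ m) (Pi.single o 1)
      = fun i : Fin m => (c ((m - (i : ℕ) : ℕ) : ZMod n) : ℤ) := by
    have hpow : T.mulVecLin ^ m = T.mulVecLin * T.mulVecLin ^ (m - 1) := by
      rw [← pow_succ', Nat.sub_add_cancel hm0]
    rw [hpow, Module.End.mul_apply, hTi (m - 1) (by omega)]
    funext i
    simp [hT]
  have hpT : Polynomial.aeval T.mulVecLin p (Pi.single o 1) = 0 := by
    funext i
    simp only [hp, compPoly, map_sub, map_pow, Polynomial.aeval_X, map_sum, map_mul,
      LinearMap.sub_apply, LinearMap.sum_apply, hTm]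
    rw [Finset.sum_range]
    simp [hTi, Finset.sum_apply, Pi.single_apply]
  obtain ⟨e₂⟩ := coker_aeval_equiv T.mulVecLin (Pi.single o 1) p (Polynomial.X ^ n - 1) m
    (compPoly_monic c m) (compPoly_natDegree c m) hpT (Pi.basisFun ℤ (Fin m)) (by
      intro i
      rw [hTi i i.2]
      simp)
  have hTr : Polynomial.aeval T.mulVecLin (Polynomial.X ^ n - 1 : Polynomial ℤ)
      = (T ^ n - 1 : Matrix (Fin m) (Fin m) ℤ).mulVecLin := by
    have hpow : (T ^ n).mulVecLin = T.mulVecLin ^ n := by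
      simpa only [Matrix.toLin'_apply'] using Matrix.toLin'_pow T n
    refine LinearMap.ext fun x => ?_
    have := LinearMap.congr_fun hpow x
    simp only [Matrix.mulVecLin_apply] at this
    simp [this]
  rw [Set.pair_comm] at e₂
  rw [hrange] at e₁
  rw [hTr] at e₂
  exact ⟨e₁.trans e₂.symm⟩
end

section
/- Let n ≥ 2 and let J be the n×n all-ones integer matrix (the adjacency matrix of the complete n-graph with one loop at each vertex, K_n^{(1)}). Then det(I − Jᵀ) = −(n − 1), and the cokernel (Fin n → ℤ) ⧸ range(I − Jᵀ) is isomorphic as a ℤ-module to ZMod (n−1). -/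
/-!
Since `(1 - Jᵀ) x = x - (∑ x) • 1`, the range of `1 - Jᵀ` consists of the vectors whose
coordinate sum is divisible by `n - 1`: if `∑ v = (n - 1) k` then `v` is the image of `v - k • 1`.
Hence the range is the kernel of the surjection `v ↦ ∑ v mod (n - 1)` onto `ZMod (n - 1)`, and the
first isomorphism theorem computes the cokernel. The determinant is that of a rank-one perturbation of the identity, given by the matrix determinant lemma.
-/

open Matrix Finset

/-- For `n ≥ 2` and `J` the `n × n` all-ones integer matrix (the adjacency matrix of the
complete `n`-graph with one loop at each vertex), `det(I - Jᵀ) = -(n - 1)` and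
`Coker(I - Jᵀ) ≅ ℤ/(n-1)ℤ`. -/
theorem stmt_6 (n : ℕ) (hn : 2 ≤ n)
    (J : Matrix (Fin n) (Fin n) ℤ) (hJ : ∀ i j, J i j = 1) :
    ((1 : Matrix (Fin n) (Fin n) ℤ) - Jᵀ).det = -((n : ℤ) - 1) ∧
      Nonempty (((Fin n → ℤ) ⧸
          LinearMap.range ((1 - Jᵀ : Matrix (Fin n) (Fin n) ℤ).mulVecLin)) ≃ₗ[ℤ]
        ZMod (n - 1)) := by
  constructor
  · have h : (1 : Matrix (Fin n) (Fin n) ℤ) - Jᵀ =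
        1 + replicateCol Unit (fun _ => (-1 : ℤ)) * replicateRow Unit (fun _ => (1 : ℤ)) := by
      ext i j
      simp [Matrix.mul_apply, hJ, sub_eq_add_neg]
    rw [h, det_one_add_replicateCol_mul_replicateRow]
    simp [dotProduct]
    ring
  · have hcast : ((n - 1 : ℕ) : ℤ) = n - 1 := by push_cast [show 1 ≤ n by omega]; rfl
    have hmul : ∀ x : Fin n → ℤ, (1 - Jᵀ).mulVec x = fun i => x i - ∑ j, x j := by
      intro x
      ext i
      simp [Matrix.mulVec, dotProduct, hJ, sub_mul, Matrix.one_apply]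
    let f : (Fin n → ℤ) →ₗ[ℤ] ZMod (n - 1) :=
      (Int.castAddHom (ZMod (n - 1))).toIntLinearMap ∘ₗ (∑ i, LinearMap.proj i)
    have hf : ∀ v, f v = ((∑ i, v i : ℤ) : ZMod (n - 1)) := by
      intro v
      simp [f]
    have hsurj : Function.Surjective f := by
      intro z
      obtain ⟨k, rfl⟩ := ZMod.intCast_surjective z
      refine ⟨Pi.single ⟨0, by omega⟩ k, ?_⟩
      rw [hf, Finset.sum_pi_single']
      simp
    have hker : LinearMap.range ((1 - Jᵀ : Matrix (Fin n) (Fin n) ℤ).mulVecLin) =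
        LinearMap.ker f := by
      ext v
      rw [LinearMap.mem_ker, hf, ZMod.intCast_zmod_eq_zero_iff_dvd, hcast]
      constructor
      · rintro ⟨x, rfl⟩
        refine ⟨-∑ j, x j, ?_⟩
        rw [Matrix.mulVecLin_apply, hmul]
        simp [Finset.sum_sub_distrib]
        ring
      · rintro ⟨k, hk⟩
        refine ⟨fun i => v i - k, ?_⟩
        rw [Matrix.mulVecLin_apply, hmul]
        ext i
        simp [Finset.sum_sub_distrib, hk]
        ring
    exact ⟨(Submodule.quotEquivOfEq _ _ hker).trans (f.quotKerEquivOfSurjective hsurj)⟩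
end

section
/- Let n and W be positive integers with W ≥ 2, let i be a natural number with gcd(i, n) = 1, and let A be the integer circulant matrix indexed by ZMod n with A p q = W if q = p + i and 0 otherwise (the adjacency matrix of the weighted Cayley graph C_n({i}, w) with w(i) = W, i.e., the W-fold cycle D_n^W). Then: (1) det(I − Aᵀ) = 1 − Wⁿ; (2) the cokernel (ZMod n → ℤ) ⧸ range(I − Aᵀ) is isomorphic as a ℤ-module to ZMod (Wⁿ − 1); and (3) this cokernel is cyclic, generated by the class of the standard basis vector e₀ (the vector that is 1 at 0 ∈ ZMod n and 0 elsewhere). -/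
open Matrix Finset

/-!
Since `i` is a unit modulo `n`, multiplication by `i` relabels the vertices so that `I - Aᵀ`
becomes the cyclic matrix `δ_{jk} - W δ_{j,k+1}`. Multiplying this on the right by the unipotent
lower triangular matrix with entries `W ^ (j - k)` for `k ≤ j` gives an upper triangular matrix
with diagonal `(1 - W ^ n, 1, …, 1)`, whence the determinant (`det_cyclic`).

In the cokernel, the column of `I - Aᵀ` at `q` gives the relation `[e_q] = W [e_{q+i}]`
(`mulVecLin_single`). Iterating it from `0`, `[e_{-ki}] = W ^ k [e_0]` for all `k`
(`mk_single_neg_mul`). As every vertex has the form `-ki`, the class of `e_0` generates, and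
`k = n` shows that `W ^ n - 1` annihilates it. Conversely, `e_{-ki} ↦ W ^ k` is a well-defined
map onto `ℤ / (W ^ n - 1)` that vanishes on the range, so there are no further relations.
-/

/-- The determinant is computed by an explicit triangularisation on the right. -/
lemma det_cyclic (m : ℕ) (W : ℤ) (C : Matrix (Fin (m + 1)) (Fin (m + 1)) ℤ)
    (hC : ∀ j k, C j k = (if j = k then 1 else 0) - (if j = k + 1 then W else 0)) :
    C.det = 1 - W ^ (m + 1) := by
  let V : Matrix (Fin (m + 1)) (Fin (m + 1)) ℤ :=
    Matrix.of fun j k => if k ≤ j then W ^ (j.val - k.val) else 0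
  have hV : V.det = 1 := by
    rw [Matrix.det_of_isLowerTriangular V]
    · simp [V]
    · intro j k hjk
      have hjk' : j < k := hjk
      simp [V, hjk']
  have hCV : ∀ j k, (C * V) j k = V j k - W * V (j - 1) k := by
    intro j k
    simp only [Matrix.mul_apply, hC, sub_mul, Finset.sum_sub_distrib, ite_mul, one_mul, zero_mul,
      Finset.sum_ite_eq, Finset.mem_univ, if_true, ← sub_eq_iff_eq_add]
  have hsucc : ∀ (j : Fin m) k, (C * V) j.succ k = if j.succ = k then 1 else 0 := by
    intro j k
    have h1 : j.succ - 1 = j.castSucc := by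
      rw [sub_eq_iff_eq_add, Fin.coeSucc_eq_succ]
    rw [hCV, h1]
    simp only [V, Matrix.of_apply, Fin.le_def, Fin.ext_iff, Fin.val_succ, Fin.val_castSucc]
    rcases lt_trichotomy k.val (j.val + 1) with h | h | h
    · rw [if_pos h.le, if_pos (by omega), if_neg (by omega),
        show j.val + 1 - k.val = (j.val - k.val) + 1 by omega, pow_succ]
      ring
    · rw [if_pos h.le, if_neg (by omega), if_pos h.symm, h]
      simp
    · rw [if_neg (by omega), if_neg (by omega), if_neg (by omega)]
      simp
  have hdet : (C * V).det = 1 - W ^ (m + 1) := by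
    rw [Matrix.det_of_isUpperTriangular, Fin.prod_univ_succ]
    · have h0 : (0 : Fin (m + 1)) - 1 = Fin.last m := by
        rw [sub_eq_iff_eq_add, Fin.last_add_one]
      simp only [hsucc, hCV 0 0, h0]
      simp [V, pow_succ']
    · intro j k hjk
      have hjk' : k < j := hjk
      obtain ⟨j, rfl⟩ := Fin.exists_succ_eq.mpr (Fin.ne_zero_of_lt hjk')
      rw [hsucc, if_neg hjk'.ne']
  rwa [Matrix.det_mul, hV, mul_one] at hdet

lemma mulVecLin_single (n W i : ℕ) [NeZero n] (A : Matrix (ZMod n) (ZMod n) ℤ)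
    (hA : ∀ p q, A p q = if q = p + (i : ZMod n) then (W : ℤ) else 0) (q : ZMod n) :
    (1 - Aᵀ : Matrix (ZMod n) (ZMod n) ℤ).mulVecLin (Pi.single q 1) =
      Pi.single q 1 - (W : ℤ) • Pi.single (q + (i : ZMod n)) 1 := by
  ext p
  simp [hA, Pi.single_apply]

lemma mk_single_neg_mul (n W i : ℕ) [NeZero n] (A : Matrix (ZMod n) (ZMod n) ℤ)
    (hA : ∀ p q, A p q = if q = p + (i : ZMod n) then (W : ℤ) else 0) (k : ℕ) :
    (Submodule.Quotient.mk (Pi.single (-(k * i : ZMod n)) (1 : ℤ)) : (ZMod n → ℤ) ⧸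
        LinearMap.range ((1 - Aᵀ : Matrix (ZMod n) (ZMod n) ℤ).mulVecLin)) =
      (W : ℤ) ^ k • Submodule.Quotient.mk (Pi.single 0 1) := by
  induction k with
  | zero => simp
  | succ k ih =>
    rw [pow_succ', mul_smul, ← ih, ← Submodule.Quotient.mk_smul, Submodule.Quotient.eq]
    refine ⟨Pi.single (-((k + 1 : ℕ) * i : ZMod n)) 1, ?_⟩
    rw [mulVecLin_single n W i A hA]
    congr 4
    push_cast
    ring

/-- For the `W`-fold cycle `D_n^W` (the weighted Cayley graph `C_n({i}, w)` with
`w(i) = W`, `gcd(i, n) = 1`): `det(I - Aᵀ) = 1 - Wⁿ`, the cokernel of `I - Aᵀ` is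
`ℤ/(Wⁿ - 1)ℤ`, and it is cyclic generated by the class of the standard basis vector
`e₀`. -/
theorem stmt_8 (n W i : ℕ) [NeZero n] (hW : 2 ≤ W) (hi : Nat.gcd i n = 1)
    (A : Matrix (ZMod n) (ZMod n) ℤ)
    (hA : ∀ p q, A p q = if q = p + (i : ZMod n) then (W : ℤ) else 0) :
    ((1 : Matrix (ZMod n) (ZMod n) ℤ) - Aᵀ).det = 1 - (W : ℤ) ^ n ∧
      Nonempty (((ZMod n → ℤ) ⧸
          LinearMap.range ((1 - Aᵀ : Matrix (ZMod n) (ZMod n) ℤ).mulVecLin)) ≃ₗ[ℤ]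
        ZMod (W ^ n - 1)) ∧
      Submodule.span ℤ
          {(Submodule.Quotient.mk (Pi.single (0 : ZMod n) (1 : ℤ)) :
            (ZMod n → ℤ) ⧸
              LinearMap.range ((1 - Aᵀ : Matrix (ZMod n) (ZMod n) ℤ).mulVecLin))} = ⊤ := by
  have hu : IsUnit (i : ZMod n) := (ZMod.isUnit_iff_coprime i n).mpr hi
  obtain ⟨u, hu⟩ := hu
  -- `c p` is the exponent `k` for which `p = -ki`
  let c : ZMod n → ℕ := fun p => (-(p * (u⁻¹ : (ZMod n)ˣ))).val
  have hcast : ∀ p, (c p : ZMod n) = -(p * (u⁻¹ : (ZMod n)ˣ)) := fun p =>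
    ZMod.natCast_zmod_val _
  have hc : ∀ p, -((c p : ZMod n) * i) = p := by
    intro p
    rw [hcast, ← hu]
    simp
  set R := LinearMap.range ((1 - Aᵀ : Matrix (ZMod n) (ZMod n) ℤ).mulVecLin) with hR
  let g : (ZMod n → ℤ) ⧸ R := Submodule.Quotient.mk (Pi.single 0 1)
  have hgen : ∀ x : ZMod n → ℤ,
      (Submodule.Quotient.mk x : (ZMod n → ℤ) ⧸ R) = (∑ p, x p * (W : ℤ) ^ c p) • g := by
    intro x
    have hx : x = ∑ p, x p • (Pi.single p 1 : ZMod n → ℤ) := pi_eq_sum_univ' x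
    conv_lhs => rw [hx]
    rw [← Submodule.mkQ_apply, map_sum, Finset.sum_smul]
    refine Finset.sum_congr rfl fun p _ => ?_
    have := mk_single_neg_mul n W i A hA (c p)
    rw [hc] at this
    rw [map_smul, Submodule.mkQ_apply, mul_smul, this]
  have hpos : 1 ≤ W ^ n := Nat.one_le_pow _ _ (by omega)
  have hann : ((W ^ n - 1 : ℕ) : ℤ) • g = 0 := by
    have := mk_single_neg_mul n W i A hA n
    rw [ZMod.natCast_self, zero_mul, neg_zero] at this
    push_cast [Nat.cast_sub hpos]
    rw [sub_smul, one_smul, sub_eq_zero]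
    exact this.symm
  have hWn : (W : ZMod (W ^ n - 1)) ^ n = 1 := by
    have := ZMod.natCast_self (W ^ n - 1)
    rw [Nat.cast_sub hpos, sub_eq_zero] at this
    simpa using this
  have hstep : ∀ q, (W : ZMod (W ^ n - 1)) ^ c q = W * (W : ZMod (W ^ n - 1)) ^ c (q + i) := by
    intro q
    have hmod : c q ≡ c (q + i) + 1 [MOD n] := by
      rw [← ZMod.natCast_eq_natCast_iff]
      push_cast
      rw [hcast, hcast, ← hu, add_mul, Units.mul_inv]
      ring
    rw [← pow_succ', pow_eq_pow_mod _ hWn, pow_eq_pow_mod (c (q + i) + 1) hWn, hmod]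
  let φ : (ZMod n → ℤ) →ₗ[ℤ] ZMod (W ^ n - 1) :=
    Fintype.linearCombination ℤ fun p => (W : ZMod (W ^ n - 1)) ^ c p
  have hφ : ∀ x, φ x = ((∑ p, x p * (W : ℤ) ^ c p : ℤ) : ZMod (W ^ n - 1)) := by
    intro x
    simp [φ, Fintype.linearCombination_apply]
  have hφs : ∀ p, φ (Pi.single p 1) = (W : ZMod (W ^ n - 1)) ^ c p := by
    intro p
    simp [φ, Fintype.linearCombination_apply_single]
  have hker : R = LinearMap.ker φ := by
    apply le_antisymm
    · rw [hR, LinearMap.range_le_ker_iff]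
      refine LinearMap.pi_ext' fun q => LinearMap.ext_ring ?_
      simp only [LinearMap.comp_apply, LinearMap.single_apply, LinearMap.zero_apply]
      rw [mulVecLin_single n W i A hA, map_sub, map_smul, hφs, hφs, hstep q]
      simp
    · intro x hx
      rw [LinearMap.mem_ker, hφ, ZMod.intCast_zmod_eq_zero_iff_dvd] at hx
      obtain ⟨d, hd⟩ := hx
      rw [← Submodule.Quotient.mk_eq_zero, hgen, hd, mul_comm, mul_smul, hann, smul_zero]
  have hsurj : Function.Surjective φ := by
    intro y
    obtain ⟨z, rfl⟩ := ZMod.intCast_surjective y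
    refine ⟨z • Pi.single 0 1, ?_⟩
    rw [map_smul, hφs]
    simp [c]
  refine ⟨?_, ⟨(Submodule.quotEquivOfEq _ _ hker).trans
    (φ.quotKerEquivOfSurjective hsurj)⟩, ?_⟩
  · rw [← Matrix.det_submatrix_equiv_self (Units.mulRight u)]
    have hent : ∀ j k, ((1 - Aᵀ : Matrix (ZMod n) (ZMod n) ℤ).submatrix (Units.mulRight u)
        (Units.mulRight u)) j k = (if j = k then 1 else 0) - (if j = k + 1 then (W : ℤ) else 0) := by
      intro j k
      have : (j : ZMod n) * u = k * u + i ↔ j = k + 1 := by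
        rw [← hu, ← add_one_mul, Units.mul_left_inj]
      simp [Matrix.one_apply, hA, this]
    clear_value R
    clear * - hent
    -- `ZMod (m + 1)` is `Fin (m + 1)` by definition
    obtain _ | m := n
    · exact absurd rfl (NeZero.ne 0)
    · exact det_cyclic m W _ hent
  · rw [eq_top_iff]
    rintro ⟨x⟩ -
    exact Submodule.mem_span_singleton.mpr ⟨_, (hgen x).symm⟩
end

section
/- Let n ≥ 3. Let A be the adjacency matrix of the Cayley graph D_n of the dihedral group of order 2n with respect to the generating set {r, s} (r the rotation, s the reflection): A is the integer matrix indexed by DihedralGroup n with A g h = 1 if h = g·r or h = g·s, and 0 otherwise. Let B be the integer circulant matrix indexed by ZMod n with B i j = 1 if j = i + 1 or j = i + (n − 1), and 0 otherwise (the adjacency matrix of the Cayley graph C_n({1, n−1})). Then det(I − Aᵀ) = det(I − Bᵀ), and the cokernels (DihedralGroup n → ℤ) ⧸ range(I − Aᵀ) and (ZMod n → ℤ) ⧸ range(I − Bᵀ) are isomorphic as ℤ-modules. -/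
/-!
In `D_n` the vertices `r i` and `sr (-i - 1)` have the same out-neighbours `r (i + 1)` and
`sr (-i)`; merging each such pair into one vertex `i : ZMod n` gives `C_n({1, n - 1})`. In matrix
terms this is an elementary strong shift equivalence `A = R * E`, `B = E * R`, where `R` sends a
vertex of `D_n` to its class and `E` records the out-neighbours of a class. The determinants then
agree because `det (1 - X * Y) = det (1 - Y * X)`, and the cokernels agree because `X` and `Y`
induce mutually inverse maps between the cokernels of `1 - X * Y` and `1 - Y * X`.
-/


open Matrix Finset

lemma range_one_sub_mul_le_comap {m k : Type*} [Fintype m] [Fintype k] [DecidableEq m]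
    [DecidableEq k] (X : Matrix m k ℤ) (Y : Matrix k m ℤ) :
    LinearMap.range (1 - X * Y).mulVecLin ≤
      (LinearMap.range (1 - Y * X).mulVecLin).comap Y.mulVecLin := by
  rintro _ ⟨v, rfl⟩
  refine ⟨Y *ᵥ v, ?_⟩
  simp [Matrix.mulVec_sub]

/-- The cokernels of `1 - X * Y` and `1 - Y * X` are isomorphic: modulo the range of `1 - X * Y`
the composite `X * Y` is the identity, and likewise for `Y * X`. -/
lemma nonempty_coker_one_sub_mul_comm {m k : Type*} [Fintype m] [Fintype k] [DecidableEq m]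
    [DecidableEq k] (X : Matrix m k ℤ) (Y : Matrix k m ℤ) :
    Nonempty (((m → ℤ) ⧸ LinearMap.range (1 - X * Y).mulVecLin) ≃ₗ[ℤ]
      ((k → ℤ) ⧸ LinearMap.range (1 - Y * X).mulVecLin)) := by
  refine ⟨LinearEquiv.ofLinearMap (Submodule.mapQ _ _ Y.mulVecLin (range_one_sub_mul_le_comap X Y))
    (Submodule.mapQ _ _ X.mulVecLin (range_one_sub_mul_le_comap Y X)) ?_ ?_⟩
  · refine Submodule.linearMap_qext _ (LinearMap.ext fun v => ?_)
    refine (Submodule.Quotient.eq _).2 ⟨-v, ?_⟩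
    simp [Matrix.mulVec_neg]
    abel
  · refine Submodule.linearMap_qext _ (LinearMap.ext fun v => ?_)
    refine (Submodule.Quotient.eq _).2 ⟨-v, ?_⟩
    simp [Matrix.mulVec_neg]
    abel

/-- The vertex of `C_n({1, n - 1})` to which a vertex of `D_n` is merged: `r i` and `sr (-i - 1)`
both lie over `i`. -/
def splitClass {n : ℕ} : DihedralGroup n → ZMod n
  | .r i => i
  | .sr i => -i - 1

/-- The incidence matrix of `splitClass`. -/
def splitR (n : ℕ) : Matrix (DihedralGroup n) (ZMod n) ℤ :=
  .of fun g i => if i = splitClass g then 1 else 0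

/-- The out-neighbours `r (i + 1)` and `sr (-i)` in `D_n` common to the vertices over `i`. -/
def splitE (n : ℕ) : Matrix (ZMod n) (DihedralGroup n) ℤ :=
  .of fun i h => (if h = .r (i + 1) then 1 else 0) + (if h = .sr (-i) then 1 else 0)

/-- For `n ≥ 3`, the Cayley graph `D_n` of the dihedral group of order `2n` with respect
to `{r, s}` and the Cayley graph `C_n({1, n-1})` of `ZMod n` have the same value of
`det(I - Aᵀ)` and isomorphic cokernels of `I - Aᵀ`. -/
theorem stmt_13 (n : ℕ) [NeZero n] (hn : 3 ≤ n)
    (A : Matrix (DihedralGroup n) (DihedralGroup n) ℤ)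
    (hA : ∀ g h, A g h =
      if h = g * DihedralGroup.r 1 ∨ h = g * DihedralGroup.sr 0 then 1 else 0)
    (B : Matrix (ZMod n) (ZMod n) ℤ)
    (hB : ∀ i j, B i j =
      if j = i + 1 ∨ j = i + ((n - 1 : ℕ) : ZMod n) then 1 else 0) :
    ((1 : Matrix (DihedralGroup n) (DihedralGroup n) ℤ) - Aᵀ).det =
        ((1 : Matrix (ZMod n) (ZMod n) ℤ) - Bᵀ).det ∧
      Nonempty (((DihedralGroup n → ℤ) ⧸
          LinearMap.range
            ((1 - Aᵀ : Matrix (DihedralGroup n) (DihedralGroup n) ℤ).mulVecLin)) ≃ₗ[ℤ]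
        ((ZMod n → ℤ) ⧸
          LinearMap.range ((1 - Bᵀ : Matrix (ZMod n) (ZMod n) ℤ).mulVecLin))) := by
  have hAf : A = splitR n * splitE n := by
    ext g h
    rw [hA]
    have hR : (splitR n * splitE n) g h = splitE n (splitClass g) h := by
      simp only [Matrix.mul_apply, splitR, Matrix.of_apply, ite_mul, one_mul, zero_mul,
        Finset.sum_ite_eq', Finset.mem_univ, if_true]
    rw [hR]
    rcases g with i | i <;> rcases h with j | j <;>
      simp [splitE, splitClass, add_comm]
  -- This is where `n ≥ 3` enters: the two out-neighbours `i + 1` and `i - 1` are distinct.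
  have hne : ∀ i : ZMod n, i + 1 ≠ i - 1 := by
    intro i h
    have h2 : ((2 : ℕ) : ZMod n) = 0 := by
      push_cast
      linear_combination h
    have := Nat.le_of_dvd (by norm_num) ((ZMod.natCast_eq_zero_iff 2 n).1 h2)
    omega
  have hBf : B = splitE n * splitR n := by
    ext i j
    rw [hB, Nat.cast_sub (by omega : 1 ≤ n)]
    have h1 : i + ((n : ZMod n) - ((1 : ℕ) : ZMod n)) = i - 1 := by
      simp [sub_eq_add_neg]
    rw [h1]
    simp only [Matrix.mul_apply, splitR, splitE, Matrix.of_apply, add_mul,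
      Finset.sum_add_distrib, ite_mul, one_mul, zero_mul, Finset.sum_ite_eq',
      Finset.mem_univ, if_true, splitClass, neg_neg]
    by_cases h4 : j = i + 1
    · subst h4
      simp [hne i, -add_eq_right]
    · simp [h4]
  rw [hAf, hBf]
  refine ⟨?_, ?_⟩
  · rw [Matrix.transpose_mul, Matrix.transpose_mul, Matrix.det_one_sub_mul_comm]
  · rw [Matrix.transpose_mul, Matrix.transpose_mul]
    exact nonempty_coker_one_sub_mul_comm _ _
end

section
/- For every positive integer n, let A be the adjacency matrix of the Cayley graph D_n of the dihedral group of order 2n with respect to the generating set {r, s} (r the rotation, s the reflection): A is the integer matrix indexed by DihedralGroup n with A g h = 1 if h = g·r or h = g·s, and 0 otherwise. Then det(I − Aᵀ) ≤ 0. -/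
/-!
Write `P` for the permutation matrix of `i ↦ i + 1` and `J` for that of `i ↦ -i` on `ZMod n`.
Splitting the dihedral group into rotations and reflections turns `I - A` into the block matrix
`[[1 - P, -J], [-J, 1 - P]]`. Since `J² = 1` and `J P J = P⁻¹`, multiplying the second block row
by `J` and the second block column by `J P` gives `[[1 - P, -P], [-1, P - 1]]`, whose determinant is
`det (-(P² - P + 1))`; the two factors contribute `det J · det (J P) = det P` (`det_block`).

The determinant of `P` is the sign of an `n`-cycle, `(-1) ^ (n - 1)` (`det_permMatrix_addRight_one`), so
`det (I - A) = -det (P² - P + 1)`. Finally `P² - P + 1 = (P - ω) (P - ω̄)` over `ℂ`, with `ω` a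
primitive sixth root of unity, so its determinant is `|det (P - ω)|² ≥ 0`
(`det_sq_sub_add_one_nonneg`).
-/

open Matrix Finset

/-- Over `ℂ` the matrix factors as `(X - ω) (X - ω̄)`, so its determinant is `|det (X - ω)|²`. -/
lemma det_sq_sub_add_one_nonneg {m : Type*} [Fintype m] [DecidableEq m] (X : Matrix m m ℤ) :
    0 ≤ (X * X - X + 1).det := by
  let f : ℤ →+* ℂ := Int.castRingHom ℂ
  let Y : Matrix m m ℂ := f.mapMatrix X
  let ω : ℂ := ⟨1 / 2, √3 / 2⟩
  have hsum : ω + star ω = 1 := by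
    apply Complex.ext <;> simp [ω]
    norm_num
  have hprod : ω * star ω = 1 := by
    have h3 : √3 * √3 = (3 : ℝ) := Real.mul_self_sqrt (by norm_num)
    apply Complex.ext <;> simp [ω] <;> nlinarith
  have hfac : f.mapMatrix (X * X - X + 1) = (Y - ω • 1) * (Y - star ω • 1) := by
    have : (Y - ω • 1) * (Y - star ω • 1) =
        Y * Y - (ω + star ω) • Y + (ω * star ω) • (1 : Matrix m m ℂ) := by
      simp only [sub_mul, mul_sub, smul_mul_assoc, mul_smul_comm, one_mul, mul_one, smul_sub,
        add_smul, smul_smul, mul_comm (star ω) ω]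
      abel
    rw [this, hsum, hprod, one_smul, one_smul]
    simp only [Y, map_add, map_sub, map_mul, map_one]
  have hconj : (Y - star ω • 1).det = star (Y - ω • 1).det := by
    have hY : Y.map star = Y := by
      ext i j
      simp [Y, f]
    rw [← det_conjTranspose, conjTranspose_sub, conjTranspose_smul, conjTranspose_one,
      ← det_transpose, transpose_sub, transpose_smul, transpose_one]
    rw [conjTranspose, transpose_map, hY]
  have hdet : ((X * X - X + 1).det : ℂ) = (Complex.normSq (Y - ω • 1).det : ℂ) := by
    have h := RingHom.map_det f (X * X - X + 1)
    rw [hfac, det_mul, hconj] at h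
    rw [← Complex.mul_conj]
    exact h
  have hreal : ((X * X - X + 1).det : ℝ) = Complex.normSq (Y - ω • 1).det := by
    apply Complex.ofReal_injective
    rw [← hdet]
    simp
  have := Complex.normSq_nonneg (Y - ω • 1).det
  rw [← hreal] at this
  exact_mod_cast this

/-- Translation by `1` is an `n`-cycle. -/
lemma det_permMatrix_addRight_one (n : ℕ) [NeZero n] :
    ((Equiv.addRight (1 : ZMod n)).permMatrix ℤ).det = (-1) ^ (n - 1) := by
  obtain ⟨k, rfl⟩ := Nat.exists_eq_succ_of_ne_zero (NeZero.ne n)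
  have hs : Equiv.Perm.sign (Equiv.addRight (1 : ZMod (k + 1))) = (-1) ^ (k + 1 - 1) := by
    rw [← sign_finRotate]
    -- `ZMod (k + 1)` unfolds to `Fin (k + 1)`, where the translation is `finRotate`.
    refine Equiv.Perm.sign_eq_sign_of_equiv _ _ (Equiv.refl (Fin (k + 1))) fun i ↦ ?_
    exact (finRotate_apply (n := k + 1) i).symm
  rw [det_permutation]
  simp [hs]

/-- The relations `J² = 1` and `J P J P = 1` reduce the block determinant to one in `P` alone. -/
lemma det_block {R m : Type*} [CommRing R] [Fintype m] [DecidableEq m] (P J : Matrix m m R)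
    (hJ : J * J = 1) (hJP : J * P * (J * P) = 1) :
    (fromBlocks (1 - P) (-J) (-J) (1 - P)).det * P.det = (-(P * P - P + 1)).det := by
  have hmul : fromBlocks 1 0 0 J * fromBlocks (1 - P) (-J) (-J) (1 - P) *
      fromBlocks 1 0 0 (J * P) = fromBlocks (1 - P) (-P) (-1) (P - 1) := by
    simp only [fromBlocks_multiply]
    have h1 : -J * (J * P) = -P := by rw [neg_mul, ← mul_assoc, hJ, one_mul]
    have h2 : J * (1 - P) * (J * P) = P - 1 := by
      rw [mul_sub, sub_mul, hJP, mul_one, ← mul_assoc, hJ, one_mul]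
    simp [h2, hJ, ← mul_assoc]
  -- Adding the first block column times `P - 2` to the second puts `1` in the lower right corner.
  have hcol : fromBlocks (1 - P) (-P) (-1) (P - 1) * fromBlocks 1 (P - 2) 0 1 =
      fromBlocks (1 - P) ((1 - P) * (P - 2) - P) (-1) 1 := by
    simp only [fromBlocks_multiply]
    congr 1 <;> noncomm_ring
  have hJd : J.det * J.det = 1 := by rw [← det_mul, hJ, det_one]
  have d1 := congrArg det hmul
  have d2 := congrArg det hcol
  rw [det_mul, det_mul, det_fromBlocks_zero₂₁, det_fromBlocks_zero₂₁, det_mul] at d1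
  rw [det_mul, det_fromBlocks_zero₂₁, det_fromBlocks_one₂₂] at d2
  simp only [det_one, one_mul, mul_one] at d1 d2
  have e : 1 - P - ((1 - P) * (P - 2) - P) * -1 = -(P * P - P + 1) := by noncomm_ring
  rw [e] at d2
  rw [← d2, ← d1]
  linear_combination -(fromBlocks (1 - P) (-J) (-J) (1 - P)).det * P.det * hJd

/-- For every positive integer `n`, the adjacency matrix `A` of the Cayley graph `D_n` of
the dihedral group of order `2n` with respect to `{r, s}` satisfies `det(I - Aᵀ) ≤ 0`. -/
theorem stmt_14 (n : ℕ) [NeZero n]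
    (A : Matrix (DihedralGroup n) (DihedralGroup n) ℤ)
    (hA : ∀ g h, A g h =
      if h = g * DihedralGroup.r 1 ∨ h = g * DihedralGroup.sr 0 then 1 else 0) :
    ((1 : Matrix (DihedralGroup n) (DihedralGroup n) ℤ) - Aᵀ).det ≤ 0 := by
  let σ : Equiv.Perm (ZMod n) := Equiv.addRight 1
  let τ : Equiv.Perm (ZMod n) := Equiv.neg _
  let P := σ.permMatrix ℤ
  let J := τ.permMatrix ℤ
  have hJ : J * J = 1 := by
    rw [← permMatrix_mul, ← permMatrix_one]
    congr 1
    ext i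
    simp [τ]
  have hJP : J * P * (J * P) = 1 := by
    simp only [P, J]
    rw [← permMatrix_mul, ← permMatrix_mul, ← permMatrix_one]
    congr 1
    ext i
    simp [τ, σ]
  have hblock : reindex DihedralGroup.equivSum DihedralGroup.equivSum (1 - A) =
      fromBlocks (1 - P) (-J) (-J) (1 - P) := by
    ext (i | i) (j | j) <;>
      simp [hA, P, J, σ, τ, DihedralGroup.equivSum, PEquiv.toMatrix_apply, one_apply,
        Equiv.toPEquiv_apply, eq_comm]
  have hdet := det_block P J hJ hJP
  rw [← hblock, det_reindex_self, det_neg, ZMod.card, det_permMatrix_addRight_one] at hdet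
  have hnonneg := det_sq_sub_add_one_nonneg P
  rw [← det_transpose, transpose_sub, transpose_one, transpose_transpose]
  have hpow : (-1 : ℤ) ^ n = -(-1) ^ (n - 1) := by
    rw [← Nat.sub_one_add_one (NeZero.ne n), pow_succ]
    simp
  rw [hpow] at hdet
  rcases neg_one_pow_eq_or ℤ (n - 1) with h | h <;> rw [h] at hdet <;> linarith
end

section
/- For a positive integer n, let A be the adjacency matrix of the Cayley graph D_n of the dihedral group of order 2n with respect to {r, s}: A is the integer matrix indexed by DihedralGroup n with A g h = 1 if h = g·r or h = g·s, and 0 otherwise, and let C = (DihedralGroup n → ℤ) ⧸ range(I − Aᵀ) be the cokernel of I − Aᵀ. Then: (1) if n ≡ 1 or 5 (mod 6), then C is the trivial group; (2) if n ≡ 2 or 4 (mod 6), then C ≅ ZMod 3; (3) if n ≡ 3 (mod 6), then C ≅ ZMod 2 × ZMod 2; (4) if n ≡ 0 (mod 6), then C ≅ ℤ × ℤ; all isomorphisms being of ℤ-modules. -/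
open Matrix Finset

/-!
Write `C` for the cokernel of `I - Aᵀ`. It is generated by the classes of the basis vectors `e_g`,
subject to `e_g = e_{g r} + e_{g s}`. With `R i = [e_{r i}]` these relations read
`R i = R (i + 1) + [e_{sr (-i)}]` and `[e_{sr (-i)}] = [e_{sr (-i + 1)}] + R i`; they are equivalent
to `[e_{sr (-i)}] = R (i - 1)` together with the recursion `R (i + 1) = R i - R (i - 1)`, where
`i` runs over `ZMod n`. Hence `C` is the universal abelian group carrying an `n`-periodic solution
of this recursion, and it is generated by `R 0` and `R (-1)`.

The characteristic polynomial `x² - x + 1` is the sixth cyclotomic polynomial, so every solution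
satisfies `R (i + 3) = - R i` and is `6`-periodic. Only `n mod 6` matters: period `1` forces
`R = 0`, period `2` forces `R (-1) = - R 0` and `3 R 0 = 0`, period `3` forces `2 R = 0`, and
period `6` imposes nothing. In each case an explicit periodic solution in the claimed group shows
that there are no further relations (`cokerEquiv`).
-/

namespace DihedralCoker

variable {n : ℕ} [NeZero n]

/-- The cokernel of `I - Aᵀ`. -/
abbrev Coker (A : Matrix (DihedralGroup n) (DihedralGroup n) ℤ) : Type :=
  (DihedralGroup n → ℤ) ⧸ LinearMap.range
    ((1 - Aᵀ : Matrix (DihedralGroup n) (DihedralGroup n) ℤ).mulVecLin)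

/-- The class in the cokernel of the basis vector at the group element `g`. -/
def cls (A : Matrix (DihedralGroup n) (DihedralGroup n) ℤ) (g : DihedralGroup n) : Coker A :=
  Submodule.Quotient.mk (Pi.single g 1)

variable {A : Matrix (DihedralGroup n) (DihedralGroup n) ℤ}

lemma col_eq
    (hA : ∀ g h, A g h =
      if h = g * DihedralGroup.r 1 ∨ h = g * DihedralGroup.sr 0 then 1 else 0)
    (g : DihedralGroup n) :
    (1 - Aᵀ).mulVecLin (Pi.single g 1) = Pi.single g 1 -
      Pi.single (g * DihedralGroup.r 1) 1 - Pi.single (g * DihedralGroup.sr 0) (1 : ℤ) := by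
  -- The two edges leaving `g` have different endpoints, so the entry `1` is never a double edge.
  have hne : g * DihedralGroup.r 1 ≠ g * DihedralGroup.sr 0 := by
    simp
  ext h
  rw [Matrix.mulVecLin_apply, Matrix.mulVec_single_one]
  simp only [Matrix.col_apply, Matrix.sub_apply, Matrix.transpose_apply, hA, Matrix.one_apply,
    Pi.sub_apply, Pi.single_apply]
  by_cases h1 : h = g * DihedralGroup.r 1
  · have h2 : h ≠ g * DihedralGroup.sr 0 := h1 ▸ hne
    simp only [if_pos h1, if_neg h2, if_pos (Or.inl h1)]
    ring
  · simp only [h1, false_or, if_false]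
    ring

lemma cls_rel
    (hA : ∀ g h, A g h =
      if h = g * DihedralGroup.r 1 ∨ h = g * DihedralGroup.sr 0 then 1 else 0)
    (g : DihedralGroup n) :
    cls A g = cls A (g * DihedralGroup.r 1) + cls A (g * DihedralGroup.sr 0) := by
  have h : (Submodule.Quotient.mk ((1 - Aᵀ).mulVecLin (Pi.single g 1)) : Coker A) = 0 :=
    (Submodule.Quotient.mk_eq_zero _).2 ⟨_, rfl⟩
  rw [col_eq hA, Submodule.Quotient.mk_sub, Submodule.Quotient.mk_sub, sub_sub, sub_eq_zero] at h
  exact h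

lemma cls_sr
    (hA : ∀ g h, A g h =
      if h = g * DihedralGroup.r 1 ∨ h = g * DihedralGroup.sr 0 then 1 else 0)
    (i : ZMod n) :
    cls A (.sr i) = cls A (.r (-i - 1)) := by
  have h1 := cls_rel hA (.r (-i - 1))
  have h2 := cls_rel hA (.sr i)
  simp only [DihedralGroup.r_mul_r, DihedralGroup.r_mul_sr, DihedralGroup.sr_mul_r,
    DihedralGroup.sr_mul_sr] at h1 h2
  rw [show -i - 1 + 1 = 0 - i by ring, show 0 - (-i - 1) = i + 1 by ring] at h1
  rw [h1, h2, add_comm]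

lemma cls_rec
    (hA : ∀ g h, A g h =
      if h = g * DihedralGroup.r 1 ∨ h = g * DihedralGroup.sr 0 then 1 else 0)
    (i : ZMod n) :
    cls A (.r (i + 1)) = cls A (.r i) - cls A (.r (i - 1)) := by
  have h1 := cls_rel hA (.r i)
  simp only [DihedralGroup.r_mul_r, DihedralGroup.r_mul_sr] at h1
  rw [cls_sr hA, show -(0 - i) - 1 = i - 1 by ring] at h1
  rw [h1, add_sub_cancel_right]

lemma cls_add_three
    (hA : ∀ g h, A g h =
      if h = g * DihedralGroup.r 1 ∨ h = g * DihedralGroup.sr 0 then 1 else 0)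
    (i : ZMod n) :
    cls A (.r (i + 3)) = - cls A (.r i) := by
  have h1 := cls_rec hA (i + 1)
  have h2 := cls_rec hA (i + 2)
  rw [show i + 1 + 1 = i + 2 by ring, show i + 1 - 1 = i by ring] at h1
  rw [show i + 2 + 1 = i + 3 by ring, show i + 2 - 1 = i + 1 by ring] at h2
  rw [h2, h1]
  abel

lemma cls_add_six_mul
    (hA : ∀ g h, A g h =
      if h = g * DihedralGroup.r 1 ∨ h = g * DihedralGroup.sr 0 then 1 else 0)
    (i : ZMod n) (k : ℕ) :
    cls A (.r (i + 6 * k)) = cls A (.r i) := by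
  induction k with
  | zero => simp
  | succ k ih =>
    rw [show i + 6 * ((k + 1 : ℕ) : ZMod n) = i + 6 * k + 3 + 3 by push_cast; ring,
      cls_add_three hA, cls_add_three hA, neg_neg, ih]

lemma cls_mem_span
    (hA : ∀ g h, A g h =
      if h = g * DihedralGroup.r 1 ∨ h = g * DihedralGroup.sr 0 then 1 else 0)
    (g : DihedralGroup n) :
    cls A g ∈ Submodule.span ℤ {cls A (.r 0), cls A (.r (-1))} := by
  have key : ∀ k : ℕ,
      cls A (.r (k : ZMod n)) ∈ Submodule.span ℤ {cls A (.r 0), cls A (.r (-1))} ∧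
      cls A (.r ((k : ZMod n) - 1)) ∈ Submodule.span ℤ {cls A (.r 0), cls A (.r (-1))} := by
    intro k
    induction k with
    | zero =>
      simp only [Nat.cast_zero, zero_sub]
      exact ⟨Submodule.subset_span (by simp), Submodule.subset_span (by simp)⟩
    | succ k ih =>
      push_cast
      rw [cls_rec hA, add_sub_cancel_right]
      exact ⟨Submodule.sub_mem _ ih.1 ih.2, ih.1⟩
  have key' : ∀ i : ZMod n,
      cls A (.r i) ∈ Submodule.span ℤ {cls A (.r 0), cls A (.r (-1))} := fun i => by
    simpa using (key i.val).1
  cases g with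
  | r i => exact key' i
  | sr i => rw [cls_sr hA]; exact key' _

lemma exists_combination
    (hA : ∀ g h, A g h =
      if h = g * DihedralGroup.r 1 ∨ h = g * DihedralGroup.sr 0 then 1 else 0)
    (x : Coker A) :
    ∃ a b : ℤ, x = a • cls A (.r 0) + b • cls A (.r (-1)) := by
  suffices h : x ∈ Submodule.span ℤ {cls A (.r 0), cls A (.r (-1))} by
    obtain ⟨a, b, h⟩ := Submodule.mem_span_pair.1 h
    exact ⟨a, b, h.symm⟩
  obtain ⟨f, rfl⟩ := Submodule.Quotient.mk_surjective _ x
  have hf : f = ∑ g, f g • (Pi.single g 1 : DihedralGroup n → ℤ) := by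
    simpa using ((Pi.basisFun ℤ (DihedralGroup n)).sum_repr f).symm
  have h2 : (Submodule.Quotient.mk f : Coker A) = ∑ g, f g • cls A g := by
    conv_lhs => rw [hf]
    rw [← Submodule.mkQ_apply, map_sum]
    rfl
  rw [h2]
  exact Submodule.sum_mem _ fun g _ => Submodule.smul_mem _ _ (cls_mem_span hA g)

/-- The universal property of the cokernel: a solution `v` of the recursion in a group `T`,
indexed by `ZMod n`, induces a map sending `[e_{r i}]` to `v i`. -/
lemma exists_lift
    (hA : ∀ g h, A g h =
      if h = g * DihedralGroup.r 1 ∨ h = g * DihedralGroup.sr 0 then 1 else 0)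
    {T : Type} [AddCommGroup T] (v : ZMod n → T) (hv : ∀ i, v (i + 1) = v i - v (i - 1)) :
    ∃ φ : Coker A →ₗ[ℤ] T, ∀ i, φ (cls A (.r i)) = v i := by
  let u : DihedralGroup n → T
    | .r i => v i
    | .sr i => v (-i - 1)
  let Φ := (Pi.basisFun ℤ (DihedralGroup n)).constr ℤ u
  have hΦ : ∀ g, Φ (Pi.single g 1) = u g := fun g => by
    rw [← Pi.basisFun_apply ℤ (DihedralGroup n) g]
    exact (Pi.basisFun ℤ (DihedralGroup n)).constr_basis ℤ u g
  have hu : ∀ g, u g = u (g * .r 1) + u (g * .sr 0) := by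
    rintro (i | i)
    · change v i = v (i + 1) + v (-(0 - i) - 1)
      rw [hv, show -(0 - i) - 1 = i - 1 by ring, sub_add_cancel]
    · change v (-i - 1) = v (-(i + 1) - 1) + v (0 - i)
      have := hv (-i - 1)
      rw [show -i - 1 + 1 = 0 - i by ring, show -i - 1 - 1 = -(i + 1) - 1 by ring] at this
      rw [this, add_sub_cancel]
  refine ⟨Submodule.liftQ _ Φ (LinearMap.range_le_ker_iff.2 ?_), fun i => hΦ (.r i)⟩
  refine (Pi.basisFun ℤ (DihedralGroup n)).ext fun g => ?_
  rw [Pi.basisFun_apply, LinearMap.comp_apply, col_eq hA, map_sub, map_sub, hΦ, hΦ, hΦ, hu g]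
  simp

/-- A solution `w` of the recursion of period `m ∣ n` identifies the cokernel with `T` as soon as
`w 0` and `w (-1)` generate `T` and every relation between them already holds in the cokernel. -/
lemma cokerEquiv
    (hA : ∀ g h, A g h =
      if h = g * DihedralGroup.r 1 ∨ h = g * DihedralGroup.sr 0 then 1 else 0)
    {T : Type} [AddCommGroup T] {m : ℕ} (hm : m ∣ n) (w : ZMod m → T)
    (hw : ∀ i, w (i + 1) = w i - w (i - 1))
    (hsurj : ∀ y : T, ∃ a b : ℤ, a • w 0 + b • w (-1) = y)
    (hinj : ∀ a b : ℤ, a • w 0 + b • w (-1) = 0 →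
      a • cls A (.r 0) + b • cls A (.r (-1)) = 0) :
    Nonempty (Coker A ≃ₗ[ℤ] T) := by
  obtain ⟨φ, hφ⟩ := exists_lift hA (fun i => w (ZMod.castHom hm (ZMod m) i))
    (fun i => by rw [map_add, map_sub, map_one, hw])
  have h0 : φ (cls A (.r 0)) = w 0 := by rw [hφ, map_zero]
  have h1 : φ (cls A (.r (-1))) = w (-1) := by rw [hφ, map_neg, map_one]
  have hab : ∀ a b : ℤ,
      φ (a • cls A (.r 0) + b • cls A (.r (-1))) = a • w 0 + b • w (-1) := fun a b => by
    rw [map_add, map_smul, map_smul, h0, h1]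
  refine ⟨LinearEquiv.ofBijective φ ⟨(injective_iff_map_eq_zero φ).2 fun x hx => ?_, fun y => ?_⟩⟩
  · obtain ⟨a, b, rfl⟩ := exists_combination hA x
    exact hinj a b (by rw [← hab, hx])
  · obtain ⟨a, b, h⟩ := hsurj y
    exact ⟨_, (hab a b).trans h⟩

/-- If `±d` is a multiple of `6` modulo `n`, then `i ↦ [e_{r i}]` has period `d`. -/
lemma cls_period
    (hA : ∀ g h, A g h =
      if h = g * DihedralGroup.r 1 ∨ h = g * DihedralGroup.sr 0 then 1 else 0)
    {k d : ℕ} (hd : n = 6 * k + d ∨ n + d = 6 * k) (i : ZMod n) :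
    cls A (.r (i + d)) = cls A (.r i) := by
  have hn : (n : ZMod n) = 0 := ZMod.natCast_self n
  rcases hd with hd | hd
  · have h : ((6 * k + d : ℕ) : ZMod n) = 0 := by rw [← hd, hn]
    push_cast at h
    rw [← cls_add_six_mul hA _ k, show i + d + 6 * (k : ZMod n) = i + (6 * k + d) by ring, h,
      add_zero]
  · have h : ((n + d : ℕ) : ZMod n) = ((6 * k : ℕ) : ZMod n) := by rw [hd]
    push_cast at h
    rw [hn, zero_add] at h
    rw [h, cls_add_six_mul hA]

lemma subsingleton_of_period_one
    (hA : ∀ g h, A g h =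
      if h = g * DihedralGroup.r 1 ∨ h = g * DihedralGroup.sr 0 then 1 else 0)
    (hp : ∀ i : ZMod n, cls A (.r (i + 1)) = cls A (.r i)) : Subsingleton (Coker A) := by
  have hz : ∀ i : ZMod n, cls A (.r i) = 0 := fun i => by
    have h := cls_rec hA (i + 1)
    rw [hp, add_sub_cancel_right, hp, sub_self] at h
    exact h
  refine subsingleton_of_forall_eq 0 fun x => ?_
  obtain ⟨a, b, rfl⟩ := exists_combination hA x
  rw [hz, hz, smul_zero, smul_zero, add_zero]

lemma equiv_of_period_two
    (hA : ∀ g h, A g h =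
      if h = g * DihedralGroup.r 1 ∨ h = g * DihedralGroup.sr 0 then 1 else 0)
    (hn : 2 ∣ n) (hp : ∀ i : ZMod n, cls A (.r (i + 2)) = cls A (.r i)) :
    Nonempty (Coker A ≃ₗ[ℤ] ZMod 3) := by
  have h1 := hp (-1)
  rw [show (-1 : ZMod n) + 2 = 0 + 1 by ring, cls_rec hA, zero_sub] at h1
  have h2 := hp 0
  rw [show (0 : ZMod n) + 2 = 1 + 1 by ring, cls_rec hA, sub_self,
    show (1 : ZMod n) = 0 + 1 by ring, cls_rec hA, zero_sub] at h2
  have h3 : cls A (.r (-1)) = - cls A (.r 0) := by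
    rw [sub_right_comm, sub_self, zero_sub] at h2
    rw [← h2, neg_neg]
  have h4 : (3 : ℤ) • cls A (.r 0) = 0 := by
    rw [h3, sub_eq_iff_eq_add] at h1
    rw [show (3 : ℤ) = 1 + 1 + 1 by norm_num, add_smul, add_smul, one_smul]
    nth_rewrite 1 [h1]
    abel
  -- Modulo `3`, `x² - x + 1 = (x + 1)²`, so `(-1)^i` solves the recursion.
  let w : ZMod 2 → ZMod 3 := ![1, -1]
  have e0 : w 0 = 1 := rfl
  have e1 : w (-1) = -1 := rfl
  refine cokerEquiv hA hn w (by decide) ?_ ?_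
  · intro y
    exact ⟨y.val, 0, by rw [e0, e1]; simp⟩
  · intro a b hab
    have h : ((a - b : ℤ) : ZMod 3) = 0 := by
      rw [e0, e1] at hab
      simpa [sub_eq_add_neg] using hab
    obtain ⟨c, hc⟩ := (ZMod.intCast_zmod_eq_zero_iff_dvd _ 3).1 h
    rw [h3, smul_neg, ← sub_eq_add_neg, ← sub_smul, hc, mul_comm, mul_smul]
    push_cast
    rw [h4, smul_zero]

lemma equiv_of_period_three
    (hA : ∀ g h, A g h =
      if h = g * DihedralGroup.r 1 ∨ h = g * DihedralGroup.sr 0 then 1 else 0)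
    (hn : 3 ∣ n) (hp : ∀ i : ZMod n, cls A (.r (i + 3)) = cls A (.r i)) :
    Nonempty (Coker A ≃ₗ[ℤ] (ZMod 2 × ZMod 2)) := by
  have h2 : ∀ i : ZMod n, (2 : ℤ) • cls A (.r i) = 0 := fun i => by
    have h := cls_add_three hA i
    rw [hp, eq_neg_iff_add_eq_zero] at h
    rw [two_smul, h]
  -- Modulo `2` the recursion is that of the Fibonacci numbers, which have period `3`.
  let w : ZMod 3 → ZMod 2 × ZMod 2 := ![(1, 0), (1, 1), (0, 1)]
  have e0 : w 0 = (1, 0) := rfl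
  have e1 : w (-1) = (0, 1) := rfl
  refine cokerEquiv hA hn w (by decide) ?_ ?_
  · rintro ⟨y, z⟩
    exact ⟨y.val, z.val, by rw [e0, e1]; simp⟩
  · intro a b hab
    rw [e0, e1] at hab
    have hab' : (a : ZMod 2) = 0 ∧ (b : ZMod 2) = 0 := by simpa using hab
    obtain ⟨c, hc⟩ := (ZMod.intCast_zmod_eq_zero_iff_dvd _ 2).1 hab'.1
    obtain ⟨d, hd⟩ := (ZMod.intCast_zmod_eq_zero_iff_dvd _ 2).1 hab'.2
    rw [hc, hd, mul_comm, mul_comm _ d, mul_smul, mul_smul]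
    push_cast
    rw [h2, h2, smul_zero, smul_zero, add_zero]

lemma equiv_of_six_dvd
    (hA : ∀ g h, A g h =
      if h = g * DihedralGroup.r 1 ∨ h = g * DihedralGroup.sr 0 then 1 else 0)
    (hn : 6 ∣ n) : Nonempty (Coker A ≃ₗ[ℤ] (ℤ × ℤ)) := by
  -- The solution of the recursion over `ℤ` with initial values `w 0 = (1, 0)`, `w (-1) = (0, 1)`.
  let w : ZMod 6 → ℤ × ℤ := ![(1, 0), (1, -1), (0, -1), (-1, 0), (-1, 1), (0, 1)]
  have e0 : w 0 = (1, 0) := rfl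
  have e1 : w (-1) = (0, 1) := rfl
  refine cokerEquiv hA hn w (by decide) ?_ ?_
  · rintro ⟨y, z⟩
    exact ⟨y, z, by rw [e0, e1]; simp⟩
  · intro a b hab
    rw [e0, e1] at hab
    have hab' : a = 0 ∧ b = 0 := by simpa using hab
    simp [hab'.1, hab'.2]

end DihedralCoker

/-- For the Cayley graph `D_n` of the dihedral group of order `2n` with respect to
`{r, s}` with adjacency matrix `A`, the cokernel `C` of `I - Aᵀ` satisfies:
(1) if `n ≡ 1, 5 (mod 6)` then `C` is trivial; (2) if `n ≡ 2, 4 (mod 6)` then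
`C ≅ ℤ/3ℤ`; (3) if `n ≡ 3 (mod 6)` then `C ≅ ℤ/2ℤ × ℤ/2ℤ`; (4) if `n ≡ 0 (mod 6)`
then `C ≅ ℤ × ℤ`. -/
theorem stmt_15 (n : ℕ) [NeZero n]
    (A : Matrix (DihedralGroup n) (DihedralGroup n) ℤ)
    (hA : ∀ g h, A g h =
      if h = g * DihedralGroup.r 1 ∨ h = g * DihedralGroup.sr 0 then 1 else 0) :
    (n % 6 = 1 ∨ n % 6 = 5 →
      Subsingleton ((DihedralGroup n → ℤ) ⧸
        LinearMap.range
          ((1 - Aᵀ : Matrix (DihedralGroup n) (DihedralGroup n) ℤ).mulVecLin))) ∧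
    (n % 6 = 2 ∨ n % 6 = 4 →
      Nonempty (((DihedralGroup n → ℤ) ⧸
        LinearMap.range
          ((1 - Aᵀ : Matrix (DihedralGroup n) (DihedralGroup n) ℤ).mulVecLin)) ≃ₗ[ℤ]
        ZMod 3)) ∧
    (n % 6 = 3 →
      Nonempty (((DihedralGroup n → ℤ) ⧸
        LinearMap.range
          ((1 - Aᵀ : Matrix (DihedralGroup n) (DihedralGroup n) ℤ).mulVecLin)) ≃ₗ[ℤ]
        (ZMod 2 × ZMod 2))) ∧
    (n % 6 = 0 →
      Nonempty (((DihedralGroup n → ℤ) ⧸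
        LinearMap.range
          ((1 - Aᵀ : Matrix (DihedralGroup n) (DihedralGroup n) ℤ).mulVecLin)) ≃ₗ[ℤ]
        (ℤ × ℤ))) := by
  refine ⟨fun h => ?_, fun h => ?_, fun h => ?_, fun h => ?_⟩
  · refine DihedralCoker.subsingleton_of_period_one hA fun i => ?_
    have hd : n = 6 * (n / 6) + 1 ∨ n + 1 = 6 * (n / 6 + 1) := by omega
    rcases hd with hd | hd
    · simpa using DihedralCoker.cls_period hA (Or.inl hd) i
    · simpa using DihedralCoker.cls_period hA (Or.inr hd) i
  · refine DihedralCoker.equiv_of_period_two hA (by omega) fun i => ?_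
    have hd : n = 6 * (n / 6) + 2 ∨ n + 2 = 6 * (n / 6 + 1) := by omega
    rcases hd with hd | hd
    · simpa using DihedralCoker.cls_period hA (Or.inl hd) i
    · simpa using DihedralCoker.cls_period hA (Or.inr hd) i
  · refine DihedralCoker.equiv_of_period_three hA (by omega) fun i => ?_
    have hd : n = 6 * (n / 6) + 3 := by omega
    simpa using DihedralCoker.cls_period hA (Or.inl hd) i
  · exact DihedralCoker.equiv_of_six_dvd hA (by omega)
end

section
/- Let d₁, d₂ be integers with 1 < d₁ < d₂. Let G : ℤ → ℤ be the unique function satisfying G(m) = G(m − d₁) + G(m − d₂) for all m ∈ ℤ, G(m) = 0 for all m ∈ {1,…,d₂} with m ≠ d₂ − 1, and G(d₂ − 1) = 1. Let T be the d₂×d₂ integer matrix (indexed by 0-indexed p, q ∈ {0,…,d₂−1}) whose last column (q = d₂ − 1) has T p q = 1 for p = 0 and p = d₂ − d₁ and 0 otherwise, and whose other columns have T p q = 1 if p = q + 1 and 0 otherwise (T is the companion matrix of t^{d₂} − t^{d₂−d₁} − 1). Then for every n ≥ 1 and all 0-indexed p, q ∈ {0,…,d₂−1}: (Tⁿ) p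 q = G(n + q − p − 1) if p ≤ d₂ − d₁ − 1, and (Tⁿ) p q = G(n + q − p − 1 + d₂) if p ≥ d₂ − d₁. -/
/-!
The claimed formula also holds at `n = 0`, where it says that a suitable table of values of `G`
near the initial window is the identity matrix; this only needs `G = 0` on `[-(d₂ - d₁), -2]`,
`[0, d₂ - 2]` and `[d₂, d₂ + d₁ - 2]`, together with `G (-1) = G (d₂ - 1) = 1`.
The induction step multiplies by `T` on the right. Every column but the last is a shift, and the
formula depends on `n` and `q` only through `n + q`; the last column adds the columns `0` and
`d₂ - d₁` of `T ^ n`, which is exactly one application of the recurrence.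
-/

open Matrix Finset

/-- Let `G : ℤ → ℤ` satisfy the recurrence `G(m) = G(m - d₁) + G(m - d₂)` for all `m`,
with `G(m) = 0` for `m ∈ {1, …, d₂}`, `m ≠ d₂ - 1`, and `G(d₂ - 1) = 1`. Let `T` be the
companion matrix of `t^{d₂} - t^{d₂ - d₁} - 1`. Then for all `n ≥ 1` and 0-indexed
`p, q ∈ {0, …, d₂ - 1}`: `(Tⁿ) p q = G(n + q - p - 1)` if `p ≤ d₂ - d₁ - 1` and
`(Tⁿ) p q = G(n + q - p - 1 + d₂)` if `p ≥ d₂ - d₁`. -/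
theorem stmt_16 (d₁ d₂ : ℕ) (hd₁ : 1 < d₁) (hd₁₂ : d₁ < d₂)
    (G : ℤ → ℤ)
    (hrec : ∀ m : ℤ, G m = G (m - d₁) + G (m - d₂))
    (hzero : ∀ m : ℤ, 1 ≤ m → m ≤ d₂ → m ≠ (d₂ : ℤ) - 1 → G m = 0)
    (hone : G ((d₂ : ℤ) - 1) = 1)
    (T : Matrix (Fin d₂) (Fin d₂) ℤ)
    (hT : ∀ p q : Fin d₂, T p q =
      if (q : ℕ) = d₂ - 1 then (if (p : ℕ) = 0 ∨ (p : ℕ) = d₂ - d₁ then 1 else 0)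
      else if (p : ℕ) = (q : ℕ) + 1 then 1 else 0) :
    ∀ n : ℕ, 1 ≤ n → ∀ p q : Fin d₂,
      (T ^ n) p q =
        if (p : ℕ) ≤ d₂ - d₁ - 1
        then G ((n : ℤ) + ((q : ℕ) : ℤ) - ((p : ℕ) : ℤ) - 1)
        else G ((n : ℤ) + ((q : ℕ) : ℤ) - ((p : ℕ) : ℤ) - 1 + d₂) := by
  -- The window of known values reaches down to `0`, because `G d₂ = G (d₂ - d₁) + G 0`.
  have h0 : G 0 = 0 := by
    have h := hrec d₂
    rw [hzero d₂ (by omega) le_rfl (by omega),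
      hzero (d₂ - d₁) (by omega) (by omega) (by omega), sub_self] at h
    omega
  have hz : ∀ m : ℤ, 0 ≤ m → m ≤ d₂ → m ≠ (d₂ : ℤ) - 1 → G m = 0 := by
    intro m hm hm' hne
    rcases hm.eq_or_lt with rfl | hpos
    · exact h0
    · exact hzero m (by omega) hm' hne
  have hhigh : ∀ m : ℤ, 0 ≤ m → m ≤ d₂ + d₁ - 2 → m ≠ (d₂ : ℤ) - 1 → G m = 0 := by
    intro m hm hm' hne
    by_cases h : m ≤ d₂
    · exact hz m hm h hne
    · rw [hrec m, hz (m - d₁) (by omega) (by omega) (by omega),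
        hz (m - d₂) (by omega) (by omega) (by omega), add_zero]
  have hback : ∀ m : ℤ, G m = G (m + d₂) - G (m + d₂ - d₁) := by
    intro m
    have h := hrec (m + d₂)
    rw [add_sub_cancel_right] at h
    omega
  have hneg : G (-1) = 1 := by
    rw [hback, show (-1 : ℤ) + d₂ = d₂ - 1 by ring, hone,
      hz (d₂ - 1 - d₁) (by omega) (by omega) (by omega), sub_zero]
  have hlow : ∀ m : ℤ, (d₁ : ℤ) - d₂ ≤ m → m ≤ d₂ - 2 → m ≠ -1 → G m = 0 := by
    intro m hm hm' hne
    by_cases h : 0 ≤ m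
    · exact hz m h (by omega) (by omega)
    · rw [hback, hz (m + d₂) (by omega) (by omega) (by omega),
        hz (m + d₂ - d₁) (by omega) (by omega) (by omega), sub_zero]
  -- Dropping `1 ≤ n` lets the induction start from `T ^ 0 = 1`.
  suffices H : ∀ n : ℕ, ∀ p q : Fin d₂,
      (T ^ n) p q =
        if (p : ℕ) ≤ d₂ - d₁ - 1
        then G ((n : ℤ) + ((q : ℕ) : ℤ) - ((p : ℕ) : ℤ) - 1)
        else G ((n : ℤ) + ((q : ℕ) : ℤ) - ((p : ℕ) : ℤ) - 1 + d₂) from fun n _ => H n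
  intro n
  induction n with
  | zero =>
    intro p q
    have hp := p.isLt
    have hq := q.isLt
    rw [pow_zero, Matrix.one_apply]
    by_cases hpq : p = q
    · subst hpq
      rw [if_pos rfl]
      split_ifs
      · exact hneg.symm.trans (congrArg G (by push_cast; ring))
      · exact hone.symm.trans (congrArg G (by push_cast; ring))
    · rw [if_neg hpq]
      have hne : (p : ℕ) ≠ q := fun h => hpq (Fin.ext h)
      split_ifs
      · exact (hlow _ (by omega) (by omega) (by omega)).symm
      · exact (hhigh _ (by omega) (by omega) (by omega)).symm
  | succ n ih =>
    intro p q
    have hq := q.isLt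
    rw [pow_succ, Matrix.mul_apply]
    by_cases hlast : (q : ℕ) = d₂ - 1
    · let a : Fin d₂ := ⟨0, by omega⟩
      let b : Fin d₂ := ⟨d₂ - d₁, by omega⟩
      have hab : a ≠ b := fun h => by
        have := congrArg Fin.val h
        simp only [a, b] at this
        omega
      have hsum : ∑ j, (T ^ n) p j * T j q = (T ^ n) p a + (T ^ n) p b := by
        rw [Fintype.sum_eq_add a b hab]
        · simp [hT, hlast, a, b]
        · rintro j ⟨hja, hjb⟩
          have h1 : (j : ℕ) ≠ 0 := fun h => hja (Fin.ext h)
          have h2 : (j : ℕ) ≠ d₂ - d₁ := fun h => hjb (Fin.ext h)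
          simp [hT, hlast, h1, h2]
      have hqz : ((q : ℕ) : ℤ) = d₂ - 1 := by omega
      have hbz : ((d₂ - d₁ : ℕ) : ℤ) = d₂ - d₁ := by omega
      rw [hsum, ih, ih]
      simp only [a, b, hqz, hbz]
      split_ifs
      · rw [hrec (((n + 1 : ℕ) : ℤ) + (d₂ - 1) - ((p : ℕ) : ℤ) - 1), add_comm]
        congr 2 <;> push_cast <;> ring
      · rw [hrec (((n + 1 : ℕ) : ℤ) + (d₂ - 1) - ((p : ℕ) : ℤ) - 1 + d₂), add_comm]
        congr 2 <;> push_cast <;> ring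
    · let b : Fin d₂ := ⟨q + 1, by omega⟩
      have hsum : ∑ j, (T ^ n) p j * T j q = (T ^ n) p b := by
        rw [Fintype.sum_eq_single b]
        · simp [hT, hlast, b]
        · intro j hj
          have h1 : (j : ℕ) ≠ q + 1 := fun h => hj (Fin.ext h)
          simp [hT, hlast, h1]
      rw [hsum, ih]
      simp only [b]
      split_ifs <;> congr 1 <;> push_cast <;> ring
end
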